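/- Let ((Y_n, Σ_n, B_n), f_{m,n}, μ_n) be a projective sequence of conditional probability systems where each Y_n is a Souslin space. Then there exists a unique CPS μ on the projective limit Y = lim← Y_n (with conditioning family B_Y = f̄₁^{-1}(B₁)) such that L̄_{f̄_n}(μ) = μ_n for every n, where f̄_n : Y → Y_n are the canonical limit projections. -/

import Mathlib

open MeasureTheory Set TopologicalSpace

/-- A conditional probability system on `(X, Σ_X, 𝓑)`: a family of probability measures
`μ(·|B)`, `B ∈ 𝓑`, with `μ(B|B) = 1` and the chain rule
`μ(A|B)·μ(B|C) = μ(A|C)` whenever `A ⊆ B ⊆ C`, `A` measurable, `B, C ∈ 𝓑`. -/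
def IsCPS {X : Type*} [MeasurableSpace X] (𝓑 : Set (Set X)) (μ : 𝓑 → ProbabilityMeasure X) : Prop :=
  (∀ B : 𝓑, (μ B : Measure X) (B : Set X) = 1) ∧
  ∀ (A : Set X) (B C : 𝓑), MeasurableSet A → A ⊆ (B : Set X) → (B : Set X) ⊆ (C : Set X) →
    (μ B : Measure X) A * (μ C : Measure X) (B : Set X) = (μ C : Measure X) A

/-- A Souslin space: continuous image of a Polish (complete separable metrizable) space. -/
def SouslinSpace (α : Type*) [TopologicalSpace α] : Prop :=
  ∃ (β : Type) (t : TopologicalSpace β), @PolishSpace β t ∧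
    ∃ f : β → α, @Continuous β α t _ f ∧ Function.Surjective f

/-!
Fix a conditioning event of the limit. The laws of its representatives at the different levels form
a coherent sequence, hence an additive content on the measurable cylinders of the space of threads.
Every finite Borel measure on a Hausdorff Souslin space is inner regular for compact sets, because
a nonempty measurable set is a continuous image of `ℕ → ℕ` and bounding the coordinates one after
another loses arbitrarily little mass. Inner regularity puts compact sets inside a decreasing
sequence of cylinders of content at least `ε > 0`, and compactness of their product yields a thread
in all of the cylinders; the content is therefore countably additive and extends to a measure.

The chain rule says that two finite measures agree, so it can be checked on cylinders, where it is
the chain rule of a single level. Finally, a countable product of Souslin spaces is Souslin, hence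
hereditarily Lindelöf, so the cylinders generate the Borel σ-algebra of the limit.
-/

open Filter Function Topology
open scoped ENNReal

section InnerRegular

lemma isCompact_Iic_of_orderBot {α : Type*} [Preorder α] [OrderBot α] [TopologicalSpace α]
    [CompactIccSpace α] (a : α) : IsCompact (Iic a) := by
  simpa only [Icc_bot] using isCompact_Icc (a := ⊥) (b := a)

lemma exists_pi_Iio_subset_of_Iic_subset {k : ℕ → ℕ} {U : Set (ℕ → ℕ)} (hU : IsOpen U)
    (hk : Iic k ⊆ U) : ∃ n, (Iio n).pi (fun i => Iic (k i)) ⊆ U := by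
  by_contra! hnot
  choose x hx hxU using fun n => not_subset.1 (hnot n)
  obtain ⟨a, ha, φ, hφ, hlim⟩ :=
    (isCompact_Iic_of_orderBot k).tendsto_subseq fun n => (inf_le_right : x n ⊓ k ≤ k)
  have hxlim : Tendsto (x ∘ φ) atTop (𝓝 a) := by
    refine tendsto_pi_nhds.2 fun i => (tendsto_pi_nhds.1 hlim i).congr' ?_
    filter_upwards [hφ.tendsto_atTop.eventually_gt_atTop i] with n hn
    exact inf_eq_left.2 (hx (φ n) i hn)
  exact hU.isClosed_compl.mem_of_tendsto hxlim (Eventually.of_forall fun n => hxU (φ n)) (hk ha)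

lemma iInter_closure_image_pi_Iio_subset {α : Type*} [TopologicalSpace α] [T2Space α]
    {g : (ℕ → ℕ) → α} (hg : Continuous g) (k : ℕ → ℕ) :
    ⋂ n, closure (g '' (Iio n).pi fun i => Iic (k i)) ⊆ g '' Iic k := by
  intro y hy
  by_contra hyK
  obtain ⟨U, V, hU, hV, hKU, hyV, hUV⟩ := SeparatedNhds.of_isCompact_isCompact
    ((isCompact_Iic_of_orderBot k).image hg) isCompact_singleton (disjoint_singleton_right.2 hyK)
  obtain ⟨n, hn⟩ := exists_pi_Iio_subset_of_Iic_subset (hU.preimage hg) (image_subset_iff.1 hKU)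
  have hclosure := (hUV.mono_left (image_subset_iff.2 hn)).closure_left hV
  exact hclosure.notMem_of_mem_right (hyV rfl) (mem_iInter.1 hy n)

lemma exists_forall_lt_measure_image_pi_Iio {α : Type*} [MeasurableSpace α] (ν : Measure α)
    (g : (ℕ → ℕ) → α) {r : ℝ≥0∞} (hr : r < ν (range g)) :
    ∃ k : ℕ → ℕ, ∀ n, r < ν (g '' (Iio n).pi fun i => Iic (k i)) := by
  have exists_bound (n : ℕ) (S : Set (ℕ → ℕ)) :
      ∃ a, r < ν (g '' S) → r < ν (g '' (S ∩ {x | x n ≤ a})) := by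
    have hmono : Monotone fun a => g '' (S ∩ {x | x n ≤ a}) := fun a b hab =>
      image_mono (inter_subset_inter_right _ fun x (hx : x n ≤ a) => hx.trans hab)
    have hunion : ⋃ a, g '' (S ∩ {x | x n ≤ a}) = g '' S := by
      rw [← image_iUnion, ← inter_iUnion, iUnion_eq_univ_iff.2 fun x => ⟨x n, le_rfl (a := x n)⟩,
        inter_univ]
    by_cases hS : r < ν (g '' S)
    · rw [← hunion, hmono.measure_iUnion] at hS
      exact (lt_iSup_iff.1 hS).imp fun a ha _ => ha
    · exact ⟨0, fun h => absurd h hS⟩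
  choose a ha using exists_bound
  let S : ℕ → Set (ℕ → ℕ) := Nat.rec univ fun n S => S ∩ {x | x n ≤ a n S}
  have hS (n : ℕ) : S n = (Iio n).pi fun i => Iic (a i (S i)) := by
    induction n with
    | zero => simp [S]
    | succ n ih =>
      rw [← Order.succ_eq_add_one, Order.Iio_succ_eq_insert, insert_pi, ← ih, inter_comm]
      rfl
  refine ⟨fun i => a i (S i), fun n => ?_⟩
  rw [← hS]
  induction n with
  | zero => simpa [S] using hr
  | succ n ih => exact ha n (S n) ih

lemma exists_isCompact_lt_measure_of_analyticSet {α : Type*} [TopologicalSpace α] [T2Space α]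
    [MeasurableSpace α] [OpensMeasurableSpace α] {ν : Measure α} [IsFiniteMeasure ν] {s : Set α}
    (hs : AnalyticSet s) {r : ℝ≥0∞} (hr : r < ν s) : ∃ K ⊆ s, IsCompact K ∧ r < ν K := by
  obtain ⟨c, hrc, hcs⟩ := exists_between hr
  rw [AnalyticSet] at hs
  obtain rfl | ⟨g, hg, rfl⟩ := hs
  · simp at hcs
  obtain ⟨k, hk⟩ := exists_forall_lt_measure_image_pi_Iio ν g hcs
  refine ⟨g '' Iic k, image_subset_range _ _, (isCompact_Iic_of_orderBot k).image hg,
    hrc.trans_le ?_⟩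
  have hanti : Antitone fun n => closure (g '' (Iio n).pi fun i => Iic (k i)) := fun m n hmn =>
    closure_mono (image_mono (pi_mono' (fun _ _ => le_rfl) (Iio_subset_Iio hmn)))
  calc c ≤ ⨅ n, ν (closure (g '' (Iio n).pi fun i => Iic (k i))) :=
        le_iInf fun n => (hk n).le.trans (measure_mono subset_closure)
    _ = ν (⋂ n, closure (g '' (Iio n).pi fun i => Iic (k i))) :=
        (hanti.measure_iInter (fun n => isClosed_closure.nullMeasurableSet)
          ⟨0, measure_ne_top _ _⟩).symm
    _ ≤ ν (g '' Iic k) := measure_mono (iInter_closure_image_pi_Iio_subset hg k)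

end InnerRegular

namespace SouslinSpace

lemma analyticSet {α : Type*} [TopologicalSpace α] [MeasurableSpace α] [BorelSpace α]
    (h : SouslinSpace α) {s : Set α} (hs : MeasurableSet s) : AnalyticSet s := by
  obtain ⟨β, _, _, g, hg, hsurj⟩ := h
  borelize β
  rw [← image_preimage_eq s hsurj]
  exact (hs.preimage hg.measurable).analyticSet.image_of_continuous hg

lemma innerRegular {α : Type*} [TopologicalSpace α] [T2Space α] [MeasurableSpace α]
    [BorelSpace α] (h : SouslinSpace α) (ν : Measure α) [IsFiniteMeasure ν] : ν.InnerRegular :=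
  ⟨fun _ hs _ hr => exists_isCompact_lt_measure_of_analyticSet (h.analyticSet hs) hr⟩

lemma hereditarilyLindelofSpace {α : Type*} [TopologicalSpace α] (h : SouslinSpace α) :
    HereditarilyLindelofSpace α := by
  obtain ⟨β, _, _, g, hg, hsurj⟩ := h
  refine HereditarilyLindelofSpace.of_forall_isOpen fun s _ => ?_
  rw [← image_preimage_eq s hsurj]
  exact (HereditarilyLindelofSpace.isLindelof _).image hg

protected lemma pi {ι : Type} [Countable ι] {Y : ι → Type*} [∀ i, TopologicalSpace (Y i)]
    (h : ∀ i, SouslinSpace (Y i)) : SouslinSpace (∀ i, Y i) := by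
  choose β t hβ g hg hsurj using h
  exact ⟨∀ i, β i, inferInstance, inferInstance, Pi.map g, Continuous.piMap hg,
    Surjective.piMap hsurj⟩

end SouslinSpace

lemma borelSpace_pi_of_hereditarilyLindelofSpace {ι : Type*} {Y : ι → Type*}
    [∀ i, TopologicalSpace (Y i)] [∀ i, MeasurableSpace (Y i)] [∀ i, BorelSpace (Y i)]
    [HereditarilyLindelofSpace (∀ i, Y i)] : BorelSpace (∀ i, Y i) := by
  refine ⟨le_antisymm pi_le_borel_pi (MeasurableSpace.generateFrom_le fun W hW => ?_)⟩
  have hnhd (x : W) : ∃ V : Set (∀ i, Y i), IsOpen V ∧ MeasurableSet V ∧ x.1 ∈ V ∧ V ⊆ W := by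
    obtain ⟨I, u, hu, hsub⟩ := isOpen_pi_iff.1 hW x.1 x.2
    exact ⟨(I : Set ι).pi u, isOpen_set_pi I.finite_toSet fun i hi => (hu i hi).1,
      MeasurableSet.pi I.countable_toSet fun i hi => (hu i hi).1.measurableSet,
      fun i hi => (hu i hi).2, hsub⟩
  choose V hVopen hVmeas hxV hVW using hnhd
  obtain ⟨t, ht, hunion⟩ := eq_open_union_countable V hVopen
  have hW_eq : W = ⋃ x ∈ t, V x := by
    rw [hunion]
    exact Subset.antisymm (fun x hx => mem_iUnion.2 ⟨⟨x, hx⟩, hxV ⟨x, hx⟩⟩) (iUnion_subset hVW)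
  rw [hW_eq]
  exact MeasurableSet.biUnion ht fun x _ => hVmeas x

/-- The projective limit of the system `f`, realised as the space of threads in the product. -/
abbrev ProjectiveLimit {ι : Type*} [Preorder ι] {Y : ι → Type*}
    (f : ∀ ⦃m n : ι⦄, m ≤ n → Y n → Y m) : Type _ :=
  {y : ∀ n, Y n // ∀ m n (h : m ≤ n), f h (y n) = y m}

namespace ProjectiveLimit

section Cylinders

variable {ι : Type*} [Preorder ι] {Y : ι → Type*} {f : ∀ ⦃m n : ι⦄, m ≤ n → Y n → Y m}

/-- The canonical projection of the projective limit to the level `n`. -/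
abbrev proj (n : ι) (y : ProjectiveLimit f) : Y n := y.val n

lemma proj_preimage_eq {m n : ι} (h : m ≤ n) (E : Set (Y m)) :
    proj (f := f) m ⁻¹' E = proj n ⁻¹' (f h ⁻¹' E) := by
  ext y
  rw [mem_preimage, mem_preimage, mem_preimage, y.2 m n h]

variable [∀ n, MeasurableSpace (Y n)]

lemma measurable_proj (n : ι) : Measurable (proj (f := f) n) :=
  (measurable_pi_apply n).comp measurable_subtype_coe

variable (f) in
/-- The measurable cylinders of the projective limit: the sets determined by a measurable
condition on a single level. -/
def cylinders : Set (Set (ProjectiveLimit f)) :=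
  {A | ∃ (n : ι) (E : Set (Y n)), MeasurableSet E ∧ proj n ⁻¹' E = A}

lemma proj_preimage_mem_cylinders {n : ι} {E : Set (Y n)} (hE : MeasurableSet E) :
    proj n ⁻¹' E ∈ cylinders f :=
  ⟨n, E, hE, rfl⟩

lemma generateFrom_cylinders :
    MeasurableSpace.generateFrom (cylinders f) = (inferInstance : MeasurableSpace _) := by
  refine le_antisymm (MeasurableSpace.generateFrom_le ?_) ?_
  · rintro _ ⟨n, E, hE, rfl⟩
    exact measurable_proj n hE
  · have hmeas : Measurable[MeasurableSpace.generateFrom (cylinders f)]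
        (Subtype.val : ProjectiveLimit f → ∀ n, Y n) :=
      @measurable_pi_lambda _ _ _ (_) _ _ fun n E hE =>
        MeasurableSpace.measurableSet_generateFrom (proj_preimage_mem_cylinders hE)
    exact hmeas.comap_le

variable [IsDirectedOrder ι]

lemma exists_common_level (hf : ∀ ⦃m n⦄ (h : m ≤ n), Measurable (f h))
    {A B : Set (ProjectiveLimit f)} (hA : A ∈ cylinders f) (hB : B ∈ cylinders f) :
    ∃ (n : ι) (E F : Set (Y n)), MeasurableSet E ∧ MeasurableSet F ∧
      proj n ⁻¹' E = A ∧ proj n ⁻¹' F = B := by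
  obtain ⟨m, E, hE, rfl⟩ := hA
  obtain ⟨n, F, hF, rfl⟩ := hB
  obtain ⟨p, hmp, hnp⟩ := exists_ge_ge m n
  exact ⟨p, _, _, hf hmp hE, hf hnp hF, (proj_preimage_eq hmp E).symm,
    (proj_preimage_eq hnp F).symm⟩

variable {ν : ∀ n, Measure (Y n)}

lemma iInf_measure_proj_image (hf : ∀ ⦃m n⦄ (h : m ≤ n), Measurable (f h))
    (hsurj : ∀ n, Surjective (proj (f := f) n))
    (hν : ∀ ⦃m n⦄ (h : m ≤ n), (ν n).map (f h) = ν m) {k : ι} {E : Set (Y k)}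
    (hE : MeasurableSet E) :
    ⨅ n, ν n (proj (f := f) n '' (proj k ⁻¹' E)) = ν k E := by
  refine le_antisymm ((iInf_le _ k).trans_eq (by rw [image_preimage_eq E (hsurj k)]))
    (le_iInf fun n => ?_)
  obtain ⟨p, hkp, hnp⟩ := exists_ge_ge k n
  have himage : proj (f := f) n '' (proj k ⁻¹' E) = f hnp '' (f hkp ⁻¹' E) := by
    rw [proj_preimage_eq hkp, ← image_preimage_eq (f hkp ⁻¹' E) (hsurj p), image_image,
      image_preimage_eq _ (hsurj p)]
    exact image_congr fun y _ => (y.2 n p hnp).symm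
  calc ν k E = ν p (f hkp ⁻¹' E) := by rw [← hν hkp, Measure.map_apply (hf hkp) hE]
    _ ≤ (ν p).map (f hnp) (f hnp '' (f hkp ⁻¹' E)) :=
        Measure.le_map_apply_image (hf hnp).aemeasurable _
    _ = ν n (proj (f := f) n '' (proj k ⁻¹' E)) := by rw [hν hnp, himage]

variable [Nonempty ι]

lemma isSetRing_cylinders (hf : ∀ ⦃m n⦄ (h : m ≤ n), Measurable (f h)) :
    IsSetRing (cylinders f) where
  empty_mem := ‹Nonempty ι›.elim fun n => ⟨n, ∅, .empty, preimage_empty⟩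
  union_mem _ _ hA hB := by
    obtain ⟨n, E, F, hE, hF, rfl, rfl⟩ := exists_common_level hf hA hB
    exact proj_preimage_mem_cylinders (hE.union hF)
  sdiff_mem _ _ hA hB := by
    obtain ⟨n, E, F, hE, hF, rfl, rfl⟩ := exists_common_level hf hA hB
    exact proj_preimage_mem_cylinders (hE.diff hF)

lemma ext_of_map_proj (hf : ∀ ⦃m n⦄ (h : m ≤ n), Measurable (f h))
    {P Q : Measure (ProjectiveLimit f)} [IsFiniteMeasure P]
    (h : ∀ n, P.map (proj n) = Q.map (proj n)) : P = Q := by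
  have hcyl (n : ι) {E : Set (Y n)} (hE : MeasurableSet E) :
      P (proj n ⁻¹' E) = Q (proj n ⁻¹' E) := by
    rw [← Measure.map_apply (measurable_proj n) hE, h, Measure.map_apply (measurable_proj n) hE]
  refine ext_of_generate_finite (cylinders f) generateFrom_cylinders.symm
    (isSetRing_cylinders hf).isSetSemiring.isPiSystem ?_ ?_
  · rintro _ ⟨n, E, hE, rfl⟩
    exact hcyl n hE
  · exact ‹Nonempty ι›.elim fun n => hcyl n .univ

/-- The additive content on the cylinders whose value at a cylinder based on a measurable set `E`
of level `n` is `ν n E`. Taking an infimum of outer measures of projections avoids choosing a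
base for each cylinder. -/
noncomputable def limitContent (hf : ∀ ⦃m n⦄ (h : m ≤ n), Measurable (f h))
    (hsurj : ∀ n, Surjective (proj (f := f) n))
    (hν : ∀ ⦃m n⦄ (h : m ≤ n), (ν n).map (f h) = ν m) : AddContent ℝ≥0∞ (cylinders f) :=
  (isSetRing_cylinders hf).addContent_of_union (fun A => ⨅ n, ν n (proj n '' A))
    (by simp only [image_empty, measure_empty, iInf_const])
    fun {A B} hA hB hAB => by
      obtain ⟨n, E, F, hE, hF, rfl, rfl⟩ := exists_common_level hf hA hB
      have hEF : Disjoint E F := (disjoint_preimage_iff (hsurj n)).1 hAB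
      rw [← preimage_union, iInf_measure_proj_image hf hsurj hν (hE.union hF),
        iInf_measure_proj_image hf hsurj hν hE, iInf_measure_proj_image hf hsurj hν hF,
        measure_union hEF hF]

lemma limitContent_proj_preimage (hf : ∀ ⦃m n⦄ (h : m ≤ n), Measurable (f h))
    (hsurj : ∀ n, Surjective (proj (f := f) n))
    (hν : ∀ ⦃m n⦄ (h : m ≤ n), (ν n).map (f h) = ν m) {k : ι} {E : Set (Y k)}
    (hE : MeasurableSet E) : limitContent hf hsurj hν (proj k ⁻¹' E) = ν k E :=
  iInf_measure_proj_image hf hsurj hν hE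

end Cylinders

section Surjective

lemma exists_forall_ge_proj_eq {ι : Type*} [SemilatticeSup ι] {Y : ι → Type*}
    {f : ∀ ⦃m n : ι⦄, m ≤ n → Y n → Y m} [InverseSystem f] {k : ι} {w : ∀ n, k ≤ n → Y n}
    (hw : ∀ ⦃m n⦄ (hm : k ≤ m) (h : m ≤ n), f h (w n (hm.trans h)) = w m hm) :
    ∃ y : ProjectiveLimit f, ∀ n (hn : k ≤ n), proj n y = w n hn := by
  refine ⟨⟨fun n => f le_sup_left (w (n ⊔ k) le_sup_right), fun m n h => ?_⟩,
    fun n hn => hw hn le_sup_left⟩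
  change f h (f _ (w (n ⊔ k) le_sup_right)) = f _ (w (m ⊔ k) le_sup_right)
  rw [InverseSystem.map_map (f := f), ← hw le_sup_right (sup_le_sup_right h k),
    InverseSystem.map_map (f := f)]

lemma surjective_proj {Y : ℕ → Type*} {f : ∀ ⦃m n : ℕ⦄, m ≤ n → Y n → Y m} [InverseSystem f]
    (hf : ∀ ⦃m n⦄ (h : m ≤ n), Surjective (f h)) (k : ℕ) : Surjective (proj (f := f) k) := by
  intro z
  choose lift hlift using fun n => hf (Nat.le_succ n)
  let w (n : ℕ) (hn : k ≤ n) : Y n := Nat.leRec z (fun n _ x => lift n x) hn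
  have hw ⦃m n : ℕ⦄ (hm : k ≤ m) (h : m ≤ n) : f h (w n (hm.trans h)) = w m hm := by
    induction n, h using Nat.le_induction with
    | base => exact InverseSystem.map_self (f := f) _
    | succ n h ih =>
      have hstep : w (n + 1) (hm.trans (h.trans n.le_succ)) = lift n (w n (hm.trans h)) :=
        Nat.leRec_succ _ _ _
      rw [hstep, ← InverseSystem.map_map (f := f) h n.le_succ, hlift, ih]
  obtain ⟨y, hy⟩ := exists_forall_ge_proj_eq hw
  exact ⟨y, (hy k le_rfl).trans (Nat.leRec_self _ _)⟩

end Surjective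

section Prokhorov

variable {Y : ℕ → Type*} [∀ n, TopologicalSpace (Y n)] [∀ n, T2Space (Y n)]
  {f : ∀ ⦃m n : ℕ⦄, m ≤ n → Y n → Y m} [InverseSystem f]

lemma exists_forall_proj_mem_of_isCompact (hf : ∀ ⦃m n⦄ (h : m ≤ n), Continuous (f h))
    {K : ∀ n, Set (Y n)} (hK : ∀ n, IsCompact (K n))
    (hne : ∀ n, ∃ z : Y n, ∀ j (h : j ≤ n), f h z ∈ K j) :
    ∃ y : ProjectiveLimit f, ∀ n, proj n y ∈ K n := by
  choose z hz using hne
  let S (k : ℕ) : Set (∀ n, Y n) :=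
    univ.pi K ∩ {y | ∀ i j (h : i ≤ j), j ≤ k → f h (y j) = y i}
  have hclosed (k : ℕ) : IsClosed {y : ∀ n, Y n | ∀ i j (h : i ≤ j), j ≤ k → f h (y j) = y i} := by
    simp only [ofPred_forall]
    exact isClosed_iInter fun i => isClosed_iInter fun j => isClosed_iInter fun h =>
      isClosed_iInter fun _ =>
        isClosed_eq ((hf h).comp (continuous_apply j)) (continuous_apply i)
  have hcompact (k : ℕ) : IsCompact (S k) := (isCompact_univ_pi hK).inter_right (hclosed k)
  have hanti (k : ℕ) : S (k + 1) ⊆ S k :=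
    inter_subset_inter_right _ fun y hy i j h hj => hy i j h (hj.trans k.le_succ)
  have hnonempty (k : ℕ) : (S k).Nonempty := by
    refine ⟨fun j => if h : j ≤ k then f h (z k) else z j, fun j _ => ?_, fun i j h hj => ?_⟩
    · dsimp only
      split_ifs with h
      · exact hz k j h
      · simpa only [InverseSystem.map_self (f := f)] using hz j j le_rfl
    · simp only [hj, h.trans hj, dite_true]
      exact InverseSystem.map_map (f := f) h hj (z k)
  obtain ⟨y, hy⟩ := IsCompact.nonempty_iInter_of_sequence_nonempty_isCompact_isClosed S hanti
    hnonempty (hcompact 0) fun k => (hcompact k).isClosed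
  rw [mem_iInter] at hy
  exact ⟨⟨y, fun m n h => (hy n).2 m n h le_rfl⟩, fun n => (hy 0).1 n (mem_univ n)⟩

variable [∀ n, MeasurableSpace (Y n)] [∀ n, BorelSpace (Y n)] {ν : ∀ n, Measure (Y n)}
  [∀ n, IsFiniteMeasure (ν n)] [∀ n, (ν n).InnerRegular]

lemma exists_forall_proj_mem_of_le_measure (hf : ∀ ⦃m n⦄ (h : m ≤ n), Continuous (f h))
    (hν : ∀ ⦃m n⦄ (h : m ≤ n), (ν n).map (f h) = ν m)
    {G : ∀ n, Set (Y n)} (hG : ∀ n, MeasurableSet (G n))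
    (hGf : ∀ ⦃m n⦄ (h : m ≤ n), MapsTo (f h) (G n) (G m))
    {ε : ℝ≥0∞} (hε : ε ≠ 0) (hGε : ∀ n, ε ≤ ν n (G n)) :
    ∃ y : ProjectiveLimit f, ∀ n, proj n y ∈ G n := by
  obtain ⟨δ, hδ_pos, hδ_sum⟩ := ENNReal.exists_pos_sum_of_countable' hε ℕ
  choose K hKG hK hKδ using fun n =>
    (hG n).exists_isCompact_sdiff_lt (measure_ne_top (ν n) _) (hδ_pos n).ne'
  have hdefect {j n : ℕ} (h : j ≤ n) : ν n (f h ⁻¹' (G j \ K j)) ≤ δ j := by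
    rw [← Measure.map_apply (hf h).measurable ((hG j).diff (hK j).measurableSet), hν h]
    exact (hKδ j).le
  have hne (n : ℕ) : ∃ z : Y n, ∀ j (h : j ≤ n), f h z ∈ K j := by
    by_contra! hnot
    have hcover : G n ⊆ ⋃ j : Iic n, f j.2 ⁻¹' (G j \ K j) := fun z hz =>
      let ⟨j, h, hj⟩ := hnot z
      mem_iUnion.2 ⟨⟨j, h⟩, hGf h hz, hj⟩
    refine (hGε n).not_gt ?_
    calc ν n (G n) ≤ ∑' j : Iic n, ν n (f j.2 ⁻¹' (G j \ K j)) :=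
          (measure_mono hcover).trans (measure_iUnion_le _)
      _ ≤ ∑' j : Iic n, δ j := ENNReal.tsum_le_tsum fun j => hdefect j.2
      _ ≤ ∑' j, δ j := ENNReal.tsum_comp_le_tsum_of_injective Subtype.val_injective δ
      _ < ε := hδ_sum
  obtain ⟨y, hy⟩ := exists_forall_proj_mem_of_isCompact hf hK hne
  exact ⟨y, fun n => hKG n (hy n)⟩

lemma nonempty_iInter_of_le_limitContent (hf : ∀ ⦃m n⦄ (h : m ≤ n), Continuous (f h))
    (hsurj : ∀ n, Surjective (proj (f := f) n))
    (hν : ∀ ⦃m n⦄ (h : m ≤ n), (ν n).map (f h) = ν m)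
    {s : ℕ → Set (ProjectiveLimit f)} (hs : ∀ k, s k ∈ cylinders f) (hanti : Antitone s)
    {ε : ℝ≥0∞} (hε : ε ≠ 0)
    (hsε : ∀ k, ε ≤ limitContent (fun _ _ h => (hf h).measurable) hsurj hν (s k)) :
    (⋂ k, s k).Nonempty := by
  have hf_meas ⦃m n⦄ (h : m ≤ n) : Measurable (f h) := (hf h).measurable
  choose N E hE hEs using hs
  -- `G n` collects those among the first `n` conditions that are visible at level `n`.
  let G (n : ℕ) : Set (Y n) := {z | ∀ k ≤ n, ∀ h : N k ≤ n, f h z ∈ E k}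
  have hG (n : ℕ) : MeasurableSet (G n) := by
    simp only [G, ofPred_forall]
    exact .iInter fun k => .iInter fun _ => .iInter fun h => hf_meas h (hE k)
  have hGf ⦃m n⦄ (h : m ≤ n) : MapsTo (f h) (G n) (G m) := fun z hz k hk hN => by
    rw [InverseSystem.map_map (f := f)]
    exact hz k (hk.trans h) (hN.trans h)
  have hsG (n : ℕ) : s n ⊆ proj n ⁻¹' G n := fun y hy k hk hN => by
    have hyk : y ∈ s k := hanti hk hy
    rw [← hEs k] at hyk
    rwa [y.2 (N k) n hN]
  have hGε (n : ℕ) : ε ≤ ν n (G n) := calc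
    ε ≤ limitContent hf_meas hsurj hν (s n) := hsε n
    _ ≤ limitContent hf_meas hsurj hν (proj n ⁻¹' G n) :=
      addContent_mono (isSetRing_cylinders hf_meas).isSetSemiring ⟨N n, E n, hE n, hEs n⟩
        (proj_preimage_mem_cylinders (hG n)) (hsG n)
    _ = ν n (G n) := limitContent_proj_preimage hf_meas hsurj hν (hG n)
  obtain ⟨y, hy⟩ := exists_forall_proj_mem_of_le_measure hf hν hG hGf hε hGε
  refine ⟨y, mem_iInter.2 fun k => ?_⟩
  have hyk := hy (k ⊔ N k) k le_sup_left le_sup_right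
  rw [y.2] at hyk
  rwa [← hEs k]

lemma isSigmaSubadditive_limitContent (hf : ∀ ⦃m n⦄ (h : m ≤ n), Continuous (f h))
    (hsurj : ∀ n, Surjective (proj (f := f) n))
    (hν : ∀ ⦃m n⦄ (h : m ≤ n), (ν n).map (f h) = ν m) :
    (limitContent (fun _ _ h => (hf h).measurable) hsurj hν).IsSigmaSubadditive := by
  have hf_meas ⦃m n⦄ (h : m ≤ n) : Measurable (f h) := (hf h).measurable
  have hring := isSetRing_cylinders hf_meas
  let c := limitContent hf_meas hsurj hν
  refine isSigmaSubadditive_of_addContent_iUnion_eq_tsum hring fun g hg hU hdisj =>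
    addContent_iUnion_eq_sum_of_tendsto_zero hring c ?_ (fun s hs hanti hempty => ?_) hg hU hdisj
  · rintro _ ⟨n, E, hE, rfl⟩
    exact (limitContent_proj_preimage hf_meas hsurj hν hE).trans_ne (measure_ne_top _ _)
  · have hzero : ⨅ k, c (s k) = 0 := by
      by_contra hε
      exact (nonempty_iInter_of_le_limitContent hf hsurj hν hs hanti hε (iInf_le _)).ne_empty hempty
    rw [← hzero]
    exact tendsto_atTop_iInf fun i j hij =>
      addContent_mono hring.isSetSemiring (hs j) (hs i) (hanti hij)

theorem exists_forall_map_proj_eq (hf : ∀ ⦃m n⦄ (h : m ≤ n), Continuous (f h))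
    (hsurj : ∀ n, Surjective (proj (f := f) n))
    (hν : ∀ ⦃m n⦄ (h : m ≤ n), (ν n).map (f h) = ν m) :
    ∃ P : Measure (ProjectiveLimit f), ∀ n, P.map (proj n) = ν n := by
  have hf_meas ⦃m n⦄ (h : m ≤ n) : Measurable (f h) := (hf h).measurable
  refine ⟨(limitContent hf_meas hsurj hν).measure (isSetRing_cylinders hf_meas).isSetSemiring
    generateFrom_cylinders.ge (isSigmaSubadditive_limitContent hf hsurj hν),
    fun n => Measure.ext fun E hE => ?_⟩
  rw [Measure.map_apply (measurable_proj n) hE,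
    AddContent.measure_eq _ _ generateFrom_cylinders.symm _ (proj_preimage_mem_cylinders hE),
    limitContent_proj_preimage hf_meas hsurj hν hE]

end Prokhorov

section ConditionalLaws

variable {ι : Type*} [Preorder ι] {Y : ι → Type*} [∀ n, MeasurableSpace (Y n)]
  {f : ∀ ⦃m n : ι⦄, m ≤ n → Y n → Y m} {𝓑 : ∀ n, Set (Set (Y n))}

/-- `P` is a limit at `C` of the conditional laws `μ`: whenever the event `C` is given by a
conditioning set `B` of level `k`, the image of `P` at level `k` is the law `μ k B`. -/
def IsLimitLaw (μ : ∀ n, 𝓑 n → ProbabilityMeasure (Y n)) (C : Set (ProjectiveLimit f))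
    (P : ProbabilityMeasure (ProjectiveLimit f)) : Prop :=
  ∀ (k : ι) (B : 𝓑 k), C = proj k ⁻¹' (B : Set (Y k)) → ∀ E : Set (Y k), MeasurableSet E →
    (μ k B : Measure (Y k)) E = (P : Measure (ProjectiveLimit f)) (proj k ⁻¹' E)

variable {μ : ∀ n, 𝓑 n → ProbabilityMeasure (Y n)}

lemma IsLimitLaw.map_proj {C : Set (ProjectiveLimit f)}
    {P : ProbabilityMeasure (ProjectiveLimit f)} (hP : IsLimitLaw μ C P) {k : ι} (B : 𝓑 k)
    (hC : C = proj k ⁻¹' (B : Set (Y k))) :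
    (P : Measure (ProjectiveLimit f)).map (proj k) = μ k B :=
  Measure.ext fun E hE => by rw [Measure.map_apply (measurable_proj k) hE, hP k B hC E hE]

variable [IsDirectedOrder ι] [Nonempty ι]

lemma IsLimitLaw.smul_restrict (hf : ∀ ⦃m n⦄ (h : m ≤ n), Measurable (f h))
    (hsurj : ∀ n, Surjective (proj (f := f) n)) (h𝓑 : ∀ n, ∀ B ∈ 𝓑 n, MeasurableSet B)
    (hμ : ∀ n, IsCPS (𝓑 n) (μ n)) {B C : Set (ProjectiveLimit f)}
    (hB : ∀ k, ∃ S ∈ 𝓑 k, B = proj k ⁻¹' S) (hC : ∀ k, ∃ S ∈ 𝓑 k, C = proj k ⁻¹' S)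
    (hBC : B ⊆ C) {P Q : ProbabilityMeasure (ProjectiveLimit f)} (hP : IsLimitLaw μ B P)
    (hQ : IsLimitLaw μ C Q) :
    (Q : Measure (ProjectiveLimit f)) B • (P : Measure (ProjectiveLimit f)).restrict B =
      (Q : Measure (ProjectiveLimit f)).restrict B := by
  have := Measure.smul_finite ((P : Measure (ProjectiveLimit f)).restrict B)
    (measure_ne_top (Q : Measure (ProjectiveLimit f)) B)
  refine ext_of_map_proj hf fun k => Measure.ext fun E hE => ?_
  obtain ⟨S, hS, hBS⟩ := hB k
  obtain ⟨T, hT, hCT⟩ := hC k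
  have hST : S ⊆ T := (hsurj k).preimage_subset_preimage_iff.1 (hBS ▸ hCT ▸ hBC)
  have hES : MeasurableSet (E ∩ S) := hE.inter (h𝓑 k S hS)
  have hchain := (hμ k).2 (E ∩ S) ⟨S, hS⟩ ⟨T, hT⟩ hES inter_subset_right hST
  rw [hP k ⟨S, hS⟩ hBS _ hES, hQ k ⟨T, hT⟩ hCT _ hES, hQ k ⟨T, hT⟩ hCT S (h𝓑 k S hS),
    preimage_inter, ← hBS, mul_comm] at hchain
  have hEk := measurable_proj (f := f) k hE
  rw [Measure.map_apply (measurable_proj k) hE, Measure.map_apply (measurable_proj k) hE,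
    Measure.smul_apply, Measure.restrict_apply hEk, Measure.restrict_apply hEk, smul_eq_mul, hchain]

lemma isCPS_of_isLimitLaw (hf : ∀ ⦃m n⦄ (h : m ≤ n), Measurable (f h))
    (hsurj : ∀ n, Surjective (proj (f := f) n)) (h𝓑 : ∀ n, ∀ B ∈ 𝓑 n, MeasurableSet B)
    (hμ : ∀ n, IsCPS (𝓑 n) (μ n)) {𝓒 : Set (Set (ProjectiveLimit f))}
    (h𝓒 : ∀ C ∈ 𝓒, ∀ k, ∃ B ∈ 𝓑 k, C = proj k ⁻¹' B)
    {P : 𝓒 → ProbabilityMeasure (ProjectiveLimit f)} (hP : ∀ C : 𝓒, IsLimitLaw μ C (P C)) :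
    IsCPS 𝓒 P := by
  refine ⟨fun C => ?_, fun A B C hA hAB hBC => ?_⟩
  · obtain ⟨k⟩ := ‹Nonempty ι›
    obtain ⟨B, hB, hCB⟩ := h𝓒 C C.2 k
    calc (P C : Measure (ProjectiveLimit f)) C
        = (P C : Measure (ProjectiveLimit f)) (proj k ⁻¹' B) := by rw [← hCB]
      _ = (μ k ⟨B, hB⟩ : Measure (Y k)) B := (hP C k ⟨B, hB⟩ hCB B (h𝓑 k B hB)).symm
      _ = 1 := (hμ k).1 ⟨B, hB⟩
  · have hrestrict := congrArg (· A) <|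
      (hP B).smul_restrict hf hsurj h𝓑 hμ (h𝓒 B B.2) (h𝓒 C C.2) hBC (hP C)
    simpa only [Measure.smul_apply, Measure.restrict_apply hA, inter_eq_left.2 hAB, smul_eq_mul,
      mul_comm] using hrestrict

end ConditionalLaws

theorem existsUnique_isLimitLaw {Y : ℕ → Type*} [∀ n, TopologicalSpace (Y n)] [∀ n, T2Space (Y n)]
    [∀ n, MeasurableSpace (Y n)] [∀ n, BorelSpace (Y n)]
    {f : ∀ ⦃m n : ℕ⦄, m ≤ n → Y n → Y m} [InverseSystem f]
    (hf : ∀ ⦃m n⦄ (h : m ≤ n), Continuous (f h)) (hsurj : ∀ n, Surjective (proj (f := f) n))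
    {𝓑 : ∀ n, Set (Set (Y n))} {μ : ∀ n, 𝓑 n → ProbabilityMeasure (Y n)}
    (hreg : ∀ n B, (μ n B : Measure (Y n)).InnerRegular)
    (hcoh : ∀ ⦃m n⦄ (h : m ≤ n) (B : 𝓑 m) (B' : 𝓑 n), (B' : Set (Y n)) = f h ⁻¹' (B : Set (Y m)) →
      ∀ E : Set (Y m), MeasurableSet E →
        (μ m B : Measure (Y m)) E = (μ n B' : Measure (Y n)) (f h ⁻¹' E))
    {C : Set (ProjectiveLimit f)} (hC : ∀ k, ∃ B ∈ 𝓑 k, C = proj k ⁻¹' B) :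
    ∃! P : ProbabilityMeasure (ProjectiveLimit f), IsLimitLaw μ C P := by
  have hf_meas ⦃m n⦄ (h : m ≤ n) : Measurable (f h) := (hf h).measurable
  choose B hB hCB using hC
  have hBf ⦃m n : ℕ⦄ (h : m ≤ n) : B n = f h ⁻¹' B m :=
    (hsurj n).preimage_injective (by rw [← hCB, ← proj_preimage_eq, ← hCB])
  let ν (n : ℕ) : Measure (Y n) := μ n ⟨B n, hB n⟩
  have hν ⦃m n : ℕ⦄ (h : m ≤ n) : (ν n).map (f h) = ν m := Measure.ext fun E hE => by
    rw [Measure.map_apply (hf_meas h) hE, hcoh h ⟨B m, hB m⟩ ⟨B n, hB n⟩ (hBf h) E hE]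
  have (n : ℕ) : (ν n).InnerRegular := hreg n _
  obtain ⟨P, hP⟩ := exists_forall_map_proj_eq hf hsurj hν
  have : IsProbabilityMeasure (P.map (proj 0)) := by rw [hP]; infer_instance
  have hPprob : IsProbabilityMeasure P := Measure.isProbabilityMeasure_of_map (proj 0)
  refine ⟨⟨P, hPprob⟩, fun k S hS E hE => ?_, fun Q hQ => Subtype.ext (.symm ?_)⟩
  · obtain rfl : S = ⟨B k, hB k⟩ :=
      Subtype.ext ((hsurj k).preimage_injective (hS.symm.trans (hCB k)))
    rw [ProbabilityMeasure.coe_mk, ← Measure.map_apply (measurable_proj k) hE, hP]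
  · exact ext_of_map_proj hf_meas fun k => (hP k).trans (hQ.map_proj ⟨B k, hB k⟩ (hCB k)).symm

end ProjectiveLimit

open ProjectiveLimit

/-- The limit carries the trace of the product σ-algebra, which for general Hausdorff `Y n` may be
smaller than its Borel σ-algebra. -/
theorem cps_projective_limit_general {Y : ℕ → Type*} [∀ n, TopologicalSpace (Y n)]
    [∀ n, T2Space (Y n)] [∀ n, MeasurableSpace (Y n)] [∀ n, BorelSpace (Y n)]
    {f : ∀ ⦃m n : ℕ⦄, m ≤ n → Y n → Y m} [InverseSystem f]
    (hf : ∀ ⦃m n⦄ (h : m ≤ n), Continuous (f h)) (hsurj : ∀ ⦃m n⦄ (h : m ≤ n), Surjective (f h))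
    {𝓑 : ∀ n, Set (Set (Y n))} (h𝓑 : ∀ n, ∀ B ∈ 𝓑 n, MeasurableSet B)
    (h𝓑f : ∀ n, ∀ B ∈ 𝓑 0, f n.zero_le ⁻¹' B ∈ 𝓑 n)
    {μ : ∀ n, 𝓑 n → ProbabilityMeasure (Y n)}
    (hreg : ∀ n B, (μ n B : Measure (Y n)).InnerRegular) (hμ : ∀ n, IsCPS (𝓑 n) (μ n))
    (hcoh : ∀ ⦃m n⦄ (h : m ≤ n) (B : 𝓑 m) (B' : 𝓑 n), (B' : Set (Y n)) = f h ⁻¹' (B : Set (Y m)) →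
      ∀ E : Set (Y m), MeasurableSet E →
        (μ m B : Measure (Y m)) E = (μ n B' : Measure (Y n)) (f h ⁻¹' E)) :
    ∃! μL : {C : Set (ProjectiveLimit f) | ∃ B ∈ 𝓑 0, C = proj 0 ⁻¹' B} →
        ProbabilityMeasure (ProjectiveLimit f),
      IsCPS {C : Set (ProjectiveLimit f) | ∃ B ∈ 𝓑 0, C = proj 0 ⁻¹' B} μL ∧
        ∀ k (B : 𝓑 k) (C : {C : Set (ProjectiveLimit f) | ∃ B ∈ 𝓑 0, C = proj 0 ⁻¹' B}),
          (C : Set (ProjectiveLimit f)) = proj k ⁻¹' (B : Set (Y k)) →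
            ∀ E : Set (Y k), MeasurableSet E →
              (μ k B : Measure (Y k)) E = (μL C : Measure (ProjectiveLimit f)) (proj k ⁻¹' E) := by
  have hproj := surjective_proj hsurj
  have h𝓒 : ∀ C ∈ {C : Set (ProjectiveLimit f) | ∃ B ∈ 𝓑 0, C = proj 0 ⁻¹' B},
      ∀ k, ∃ B ∈ 𝓑 k, C = proj k ⁻¹' B := by
    rintro _ ⟨B, hB, rfl⟩ k
    exact ⟨_, h𝓑f k B hB, proj_preimage_eq k.zero_le B⟩
  choose μL hμL huniq using fun C : {C : Set (ProjectiveLimit f) | ∃ B ∈ 𝓑 0, C = proj 0 ⁻¹' B} =>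
    existsUnique_isLimitLaw hf hproj hreg hcoh (h𝓒 C C.2)
  exact ⟨μL, ⟨isCPS_of_isLimitLaw (fun _ _ h => (hf h).measurable) hproj h𝓑 hμ h𝓒 hμL,
    fun k B C => hμL C k B⟩, fun ρ hρ => funext fun C => huniq C _ fun k B => hρ.2 k B C⟩

/-- Kolmogorov extension theorem for CPSs: a projective sequence of conditional probability
systems on Hausdorff Souslin spaces (with continuous surjective bonding maps, compatible
conditioning families, and coherent conditional laws) admits a unique limit CPS on the
projective limit, whose image conditional law under each canonical projection is the given
CPS at that level. -/
theorem cps_projective_limit (Y : ℕ → Type*)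
    [∀ n, TopologicalSpace (Y n)] [∀ n, T2Space (Y n)] [∀ n, Nonempty (Y n)]
    [∀ n, MeasurableSpace (Y n)] [∀ n, BorelSpace (Y n)]
    (hY : ∀ n, SouslinSpace (Y n))
    (f : ∀ m n, m ≤ n → Y n → Y m)
    (hcont : ∀ m n (h : m ≤ n), Continuous (f m n h))
    (hsurj : ∀ m n (h : m ≤ n), Function.Surjective (f m n h))
    (hid : ∀ n, f n n le_rfl = id)
    (hcomp : ∀ m n p (hmn : m ≤ n) (hnp : n ≤ p),
      f m p (le_trans hmn hnp) = f m n hmn ∘ f n p hnp)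
    (𝓑 : ∀ n, Set (Set (Y n)))
    (h𝓑ne : ∀ n, (𝓑 n).Nonempty) (h𝓑m : ∀ n, ∀ B ∈ 𝓑 n, MeasurableSet B)
    (hemp : ∀ n, ∅ ∉ 𝓑 n)
    (h𝓑pre : ∀ m n (h : m ≤ n), (fun B => f m n h ⁻¹' B) '' (𝓑 m) = 𝓑 n)
    (μ : ∀ n, (𝓑 n) → ProbabilityMeasure (Y n))
    (hCPS : ∀ n, IsCPS (𝓑 n) (μ n))
    (hcoh : ∀ m n (h : m ≤ n) (B : 𝓑 m) (B' : 𝓑 n),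
      (B' : Set (Y n)) = f m n h ⁻¹' (B : Set (Y m)) →
      ∀ E : Set (Y m), MeasurableSet E →
        (μ m B : Measure (Y m)) E = (μ n B' : Measure (Y n)) (f m n h ⁻¹' E)) :
    ∃! μL : {C : Set {y : ∀ n, Y n // ∀ m n (h : m ≤ n), f m n h (y n) = y m} |
          ∃ B ∈ 𝓑 0, C = (fun y => y.val 0) ⁻¹' B} →
        @ProbabilityMeasure {y : ∀ n, Y n // ∀ m n (h : m ≤ n), f m n h (y n) = y m}
          (borel {y : ∀ n, Y n // ∀ m n (h : m ≤ n), f m n h (y n) = y m}),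
      @IsCPS _ (borel {y : ∀ n, Y n // ∀ m n (h : m ≤ n), f m n h (y n) = y m})
        {C | ∃ B ∈ 𝓑 0, C = (fun y => y.val 0) ⁻¹' B} μL ∧
      ∀ (k : ℕ) (B : 𝓑 k)
        (C : {C : Set {y : ∀ n, Y n // ∀ m n (h : m ≤ n), f m n h (y n) = y m} |
          ∃ B ∈ 𝓑 0, C = (fun y => y.val 0) ⁻¹' B}),
        (C : Set {y : ∀ n, Y n // ∀ m n (h : m ≤ n), f m n h (y n) = y m}) =
            (fun y => y.val k) ⁻¹' (B : Set (Y k)) →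
        ∀ E : Set (Y k), MeasurableSet E →
          (μ k B : Measure (Y k)) E = (μL C).val ((fun y => y.val k) ⁻¹' E) := by
  have : InverseSystem fun ⦃m n⦄ h => f m n h :=
    ⟨fun n x => congrFun (hid n) x, fun _ _ _ h₁ h₂ x => congrFun (hcomp _ _ _ h₁ h₂).symm x⟩
  have := (SouslinSpace.pi hY).hereditarilyLindelofSpace
  have : BorelSpace (∀ n, Y n) := borelSpace_pi_of_hereditarilyLindelofSpace
  have hborel : borel {y : ∀ n, Y n // ∀ m n (h : m ≤ n), f m n h (y n) = y m} =
      Subtype.instMeasurableSpace :=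
    (Subtype.borelSpace _).measurable_eq.symm
  rw [hborel]
  exact cps_projective_limit_general (f := fun m n h => f m n h) hcont hsurj h𝓑m
    (fun n B hB => h𝓑pre 0 n n.zero_le ▸ mem_image_of_mem _ hB)
    (fun n B => (hY n).innerRegular _) hCPS hcoh
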